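/- Let n ≥ 1, q ∈ [1,∞), and α ≥ 0. Then for every locally integrable f on ℝ^n: (i) ‖f‖_{𝔏^{q,∞}(log 𝔏)^α} ≤ ‖f‖_{L^q(log L)^α}; (ii) ‖f‖_{L^{q,∞}(log L)^α} ≤ ‖f‖_{𝔏^{q,∞}(log 𝔏)^α}. Moreover, if α > 0 both inclusions are strict: there exists a locally integrable f with ‖f‖_{𝔏^{q,∞}(log 𝔏)^α} < ∞ but ‖f‖_{L^q(log L)^α} = ∞, and there exists a locally integrable g with ‖g‖_{L^{q,∞}(log L)^α} < ∞ but ‖g‖_{𝔏^{q,∞}(log 𝔏)^α} = ∞. -/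

import Mathlib

open MeasureTheory Real Set ENNReal

noncomputable def logFac (s : ℝ) : ℝ := Real.log (Real.exp 1 + 1 / s)

noncomputable def zygNorm (n : ℕ) (q α : ℝ)
    (f : EuclideanSpace ℝ (Fin n) → ℝ) : ℝ≥0∞ :=
  ⨆ s : Set.Ioi (0 : ℝ),
    (ENNReal.ofReal (logFac s.1) ^ α *
      ⨆ E : {E : Set (EuclideanSpace ℝ (Fin n)) //
          MeasurableSet E ∧ volume E = ENNReal.ofReal s.1},
        ∫⁻ x in E.1, ENNReal.ofReal (|f x| ^ q)) ^ (1 / q)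

/-- The non-increasing rearrangement of `f` (with the convention `inf ∅ = ∞`). -/
noncomputable def rearr (n : ℕ) (f : EuclideanSpace ℝ (Fin n) → ℝ) (s : ℝ) : ℝ≥0∞ :=
  sInf {l : ℝ≥0∞ | volume {x | l < ENNReal.ofReal |f x|} ≤ ENNReal.ofReal s}

/-- The Zygmund norm `‖f‖_{L^q(log L)^α}`. -/
noncomputable def zygmundNorm (n : ℕ) (q α : ℝ)
    (f : EuclideanSpace ℝ (Fin n) → ℝ) : ℝ≥0∞ :=
  (∫⁻ s in Set.Ioi (0 : ℝ),
    ENNReal.ofReal (logFac s) ^ α * rearr n f s ^ q) ^ (1 / q)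

/-- The weak Zygmund norm `‖f‖_{L^{q,∞}(log L)^α}`. -/
noncomputable def weakZygNorm (n : ℕ) (q α : ℝ)
    (f : EuclideanSpace ℝ (Fin n) → ℝ) : ℝ≥0∞ :=
  ⨆ s : Set.Ioi (0 : ℝ),
    (ENNReal.ofReal (logFac s.1) ^ α * ENNReal.ofReal s.1 * rearr n f s.1 ^ q) ^ (1 / q)

/-!
With `F = |f| ^ q` and `L(s) = log (e + 1 / s)`, the three norms are the `q`-th roots of
`sup_s L(s)^α sup_{|E| = s} ∫_E F`, `∫ L^α F*` and `sup_s L(s)^α s F*(s)`. As `L` is decreasing, the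
Hardy–Littlewood inequality `∫_E F ≤ ∫_0^{|E|} F*` gives the first comparison. For the second, a
superlevel set of `F` of measure larger than `s` contains a set of measure exactly `s`, because
spheres are null.

Composition with `x ↦ |B(0, |x|)|` realises every continuous decreasing profile `φ` on `(0, ∞)` as
an `F*`, and then `sup_{|E| = s} ∫_E F = ∫_0^s φ`. Let `M(s) = log (e^(α + 1) + 1 / s)`, which is
comparable to `L`. The profile `φ = (M^(-α) / α)'` has `∫_0^s φ = M(s)^(-α) / α`, whereas
`∫ M^α φ = -∫ M' / M` diverges at `0`. The profile `φ(t) = min(1, 1 / t)` separates the other two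
norms at infinity, where `L` is bounded: `s φ(s) ≤ 1`, whereas `∫_0^s φ` grows like `log s`.
-/

open Filter Topology

section Rearrangement

variable {X : Type*} [MeasurableSpace X] {μ : Measure X} {f : X → ℝ≥0∞} {l : ℝ≥0∞} {s t : ℝ}

/-- The non-increasing rearrangement of a `[0, ∞]`-valued function on an arbitrary measure space;
`rearr n f` is the case of `|f|` and Lebesgue measure. -/
noncomputable def decreasingRearrangement (μ : Measure X) (f : X → ℝ≥0∞) (t : ℝ) : ℝ≥0∞ :=
  sInf {l | μ {x | l < f x} ≤ ENNReal.ofReal t}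

/-- The largest mass `sup_{μ E = s} ∫_E f` that `f` can put on a set of measure `s`, the quantity
bounded by the norm `zygNorm`. -/
noncomputable def maxSetLIntegral (μ : Measure X) (f : X → ℝ≥0∞) (s : ℝ) : ℝ≥0∞ :=
  ⨆ E : {E : Set X // MeasurableSet E ∧ μ E = ENNReal.ofReal s}, ∫⁻ x in E.1, f x ∂μ

lemma setLIntegral_le_maxSetLIntegral {E : Set X} (hE : MeasurableSet E)
    (hEs : μ E = ENNReal.ofReal s) : ∫⁻ x in E, f x ∂μ ≤ maxSetLIntegral μ f s :=
  le_iSup (fun E : {E : Set X // MeasurableSet E ∧ μ E = ENNReal.ofReal s} ↦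
    ∫⁻ x in E.1, f x ∂μ) ⟨E, hE, hEs⟩

lemma decreasingRearrangement_le_iff :
    decreasingRearrangement μ f t ≤ l ↔ μ {x | l < f x} ≤ ENNReal.ofReal t := by
  refine ⟨fun h ↦ ?_, fun h ↦ sInf_le h⟩
  obtain rfl | hl := eq_or_ne l ⊤
  · simp
  have measure_lt_le {m : ℝ≥0∞} (hm : l < m) : μ {x | m < f x} ≤ ENNReal.ofReal t := by
    obtain ⟨m', hm', hlt⟩ := sInf_lt_iff.1 (h.trans_lt hm)
    exact (measure_mono fun x hx ↦ hlt.trans hx).trans hm'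
  obtain ⟨u, hu_anti, hu_gt, hu_lim⟩ := exists_seq_strictAnti_tendsto' hl.lt_top
  have level_eq_iUnion : {x | l < f x} = ⋃ k, {x | u k < f x} := by
    ext x
    simp only [mem_ofPred_eq, mem_iUnion]
    exact ⟨fun hx ↦ (hu_lim.eventually_lt_const hx).exists, fun ⟨k, hk⟩ ↦ (hu_gt k).1.trans hk⟩
  have level_mono : Monotone fun k ↦ {x | u k < f x} :=
    fun i j hij x hx ↦ (hu_anti.antitone hij).trans_lt hx
  rw [level_eq_iUnion, level_mono.measure_iUnion]
  exact iSup_le fun k ↦ measure_lt_le (hu_gt k).1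

lemma lt_decreasingRearrangement_iff :
    l < decreasingRearrangement μ f t ↔ ENNReal.ofReal t < μ {x | l < f x} := by
  simpa only [not_le] using decreasingRearrangement_le_iff.not

lemma antitone_decreasingRearrangement : Antitone (decreasingRearrangement μ f) := fun _ _ hst ↦
  sInf_le_sInf fun _ hl ↦ hl.trans (ENNReal.ofReal_le_ofReal hst)

lemma decreasingRearrangement_rpow {q : ℝ} (hq : 0 < q) :
    decreasingRearrangement μ (fun x ↦ f x ^ q) t = decreasingRearrangement μ f t ^ q := by
  refine eq_of_forall_ge_iff fun l ↦ ?_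
  rw [decreasingRearrangement_le_iff, ← ENNReal.le_rpow_inv_iff hq, decreasingRearrangement_le_iff]
  simp only [ENNReal.rpow_inv_lt_iff hq]

lemma lintegral_eq_lintegral_measure_ofReal_lt (hf : AEMeasurable f μ) :
    ∫⁻ x, f x ∂μ = ∫⁻ t in Ioi (0 : ℝ), μ {x | ENNReal.ofReal t < f x} := by
  by_cases hfin : μ {x | f x = ⊤} = 0
  · have ae_ne_top : ∀ᵐ x ∂μ, f x ≠ ⊤ := measure_eq_zero_iff_ae_notMem.1 hfin
    calc ∫⁻ x, f x ∂μ = ∫⁻ x, ENNReal.ofReal (f x).toReal ∂μ :=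
          lintegral_congr_ae (ae_ne_top.mono fun x hx ↦ (ENNReal.ofReal_toReal hx).symm)
      _ = ∫⁻ t in Ioi (0 : ℝ), μ {x | t < (f x).toReal} :=
          lintegral_eq_lintegral_meas_lt μ (.of_forall fun _ ↦ ENNReal.toReal_nonneg)
            hf.ennreal_toReal
      _ = ∫⁻ t in Ioi (0 : ℝ), μ {x | ENNReal.ofReal t < f x} :=
          setLIntegral_congr_fun measurableSet_Ioi fun t ht ↦ measure_congr <| ae_ne_top.mono
            fun x hx ↦ propext (ENNReal.ofReal_lt_iff_lt_toReal (le_of_lt ht) hx).symm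
  · rw [lintegral_eq_top_of_measure_eq_top_ne_zero hf hfin, eq_comm, eq_top_iff]
    calc ⊤ = ∫⁻ _ in Ioi (0 : ℝ), μ {x | f x = ⊤} := by
          rw [setLIntegral_const, Real.volume_Ioi, ENNReal.mul_top hfin]
      _ ≤ ∫⁻ t in Ioi (0 : ℝ), μ {x | ENNReal.ofReal t < f x} :=
          lintegral_mono fun t ↦ measure_mono fun x (hx : f x = ⊤) ↦
            ENNReal.ofReal_lt_top.trans_eq hx.symm

lemma lintegral_le_lintegral_of_measure_lt_le {Y : Type*} [MeasurableSpace Y] {ν : Measure Y}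
    {g : Y → ℝ≥0∞} (hg : AEMeasurable g ν) (h : ∀ l, μ {x | l < f x} ≤ ν {y | l < g y}) :
    ∫⁻ x, f x ∂μ ≤ ∫⁻ y, g y ∂ν := by
  obtain ⟨f₀, hf₀, hf₀_le, hf₀_eq⟩ := exists_measurable_le_lintegral_eq μ f
  rw [hf₀_eq, lintegral_eq_lintegral_measure_ofReal_lt hf₀.aemeasurable,
    lintegral_eq_lintegral_measure_ofReal_lt hg]
  exact lintegral_mono fun t ↦
    (measure_mono fun x hx ↦ lt_of_lt_of_le hx (hf₀_le x)).trans (h (ENNReal.ofReal t))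

/-- The set `{t > 0 | l < f* t}` is the interval `(0, μ {l < f})`, so `f` restricted to `E` has
smaller superlevel sets than `f*` restricted to `(0, μ E)`. -/
theorem setLIntegral_le_lintegral_decreasingRearrangement {E : Set X}
    (hE : μ E = ENNReal.ofReal s) :
    ∫⁻ x in E, f x ∂μ ≤ ∫⁻ t in Ioo 0 s, decreasingRearrangement μ f t := by
  refine lintegral_le_lintegral_of_measure_lt_le
    antitone_decreasingRearrangement.measurable.aemeasurable fun l ↦ ?_
  set m : ℝ≥0∞ := μ.restrict E {x | l < f x}
  have m_le_level : m ≤ μ {x | l < f x} := Measure.restrict_le_self _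
  have m_le_s : m ≤ ENNReal.ofReal s :=
    hE ▸ (measure_mono (subset_univ _)).trans (Measure.restrict_apply_univ E).le
  have m_ne_top : m ≠ ⊤ := ne_top_of_le_ne_top ENNReal.ofReal_ne_top m_le_s
  have Ioo_subset : Ioo 0 m.toReal ⊆ {t | l < decreasingRearrangement μ f t} ∩ Ioo 0 s := by
    rintro t ⟨ht0, htm⟩
    have ht : ENNReal.ofReal t < m := (ENNReal.ofReal_lt_iff_lt_toReal ht0.le m_ne_top).2 htm
    exact ⟨lt_decreasingRearrangement_iff.2 (ht.trans_le m_le_level), ht0,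
      lt_of_not_ge fun hst ↦ (ht.trans_le m_le_s).not_ge (ENNReal.ofReal_le_ofReal hst)⟩
  calc m = volume (Ioo 0 m.toReal) := by
        rw [Real.volume_Ioo, sub_zero, ENNReal.ofReal_toReal m_ne_top]
    _ ≤ volume ({t | l < decreasingRearrangement μ f t} ∩ Ioo 0 s) := measure_mono Ioo_subset
    _ = volume.restrict (Ioo 0 s) {t | l < decreasingRearrangement μ f t} :=
        (Measure.restrict_apply' measurableSet_Ioo).symm

lemma maxSetLIntegral_le_lintegral_decreasingRearrangement :
    maxSetLIntegral μ f s ≤ ∫⁻ t in Ioo 0 s, decreasingRearrangement μ f t :=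
  iSup_le fun E ↦ setLIntegral_le_lintegral_decreasingRearrangement E.2.2

lemma mul_maxSetLIntegral_le_lintegral_mul_decreasingRearrangement {w : ℝ → ℝ≥0∞}
    (hw : AntitoneOn w (Ioi 0)) (hs : 0 < s) :
    w s * maxSetLIntegral μ f s ≤ ∫⁻ t in Ioi (0 : ℝ), w t * decreasingRearrangement μ f t :=
  calc w s * maxSetLIntegral μ f s
      ≤ w s * ∫⁻ t in Ioo 0 s, decreasingRearrangement μ f t := by
        gcongr; exact maxSetLIntegral_le_lintegral_decreasingRearrangement
    _ = ∫⁻ t in Ioo 0 s, w s * decreasingRearrangement μ f t :=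
        (lintegral_const_mul _ antitone_decreasingRearrangement.measurable).symm
    _ ≤ ∫⁻ t in Ioo 0 s, w t * decreasingRearrangement μ f t :=
        setLIntegral_mono' measurableSet_Ioo fun t ht ↦
          mul_le_mul_left (hw ht.1 hs ht.2.le) _
    _ ≤ ∫⁻ t in Ioi (0 : ℝ), w t * decreasingRearrangement μ f t :=
        lintegral_mono_set Ioo_subset_Ioi_self

end Rearrangement

section IntermediateMeasure

lemma exists_measure_preimage_Iic_eq {X : Type*} [MeasurableSpace X] {μ : Measure X}
    [IsFiniteMeasure μ] {g : X → ℝ} (hg : Measurable g) (hg_null : ∀ r, μ (g ⁻¹' {r}) = 0)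
    {c : ℝ} (hc : 0 < c) (hcμ : ENNReal.ofReal c < μ univ) :
    ∃ r, μ (g ⁻¹' Iic r) = ENNReal.ofReal c := by
  set ν : Measure ℝ := μ.map g
  have ν_apply {S : Set ℝ} (hS : MeasurableSet S) : ν S = μ (g ⁻¹' S) := Measure.map_apply hg hS
  have : NullSingletonClass ν :=
    ⟨fun r ↦ (ν_apply (measurableSet_singleton r)).trans (hg_null r)⟩
  have continuous_cdf : Continuous fun r ↦ ν.real (Iic r) := by
    have increment (r : ℝ) : ν.real (Iic r) = ν.real (Iic 0) + ∫ _ in (0 : ℝ)..r, (1 : ℝ) ∂ν := by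
      rw [← intervalIntegral.integral_Iic_sub_Iic integrableOn_const integrableOn_const]
      simp only [setIntegral_const, smul_eq_mul, mul_one, add_sub_cancel]
    rw [funext increment]
    exact continuous_const.add
      (intervalIntegral.continuous_primitive (fun _ _ ↦ intervalIntegrable_const) 0)
  have below : ∃ r, ν.real (Iic r) ≤ c := by
    have : Tendsto (fun r ↦ ν.real (Iic r)) atBot (𝓝 0) := by
      have iInter_Iic_eq_empty : ⋂ r : ℝ, Iic r = ∅ := by
        exact iInter_Iic_eq_empty_iff.2 (by simpa only [range_id'] using not_bddBelow_univ)
      have tendsto_measure := tendsto_measure_iInter_atBot (μ := ν) (s := Iic)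
        (fun _ ↦ measurableSet_Iic.nullMeasurableSet) (fun _ _ ↦ Iic_subset_Iic.2)
        ⟨0, measure_ne_top _ _⟩
      rw [iInter_Iic_eq_empty, measure_empty] at tendsto_measure
      exact (ENNReal.tendsto_toReal zero_ne_top).comp tendsto_measure
    exact (this.eventually_le_const hc).exists
  have above : ∃ r, c ≤ ν.real (Iic r) := by
    have hcν : ENNReal.ofReal c < ν univ := by rwa [ν_apply .univ]
    obtain ⟨r, hr⟩ := ((tendsto_measure_Iic_atTop ν).eventually_const_lt hcν).exists
    exact ⟨r, (ENNReal.ofReal_le_iff_le_toReal (measure_ne_top _ _)).1 hr.le⟩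
  obtain ⟨r, hr⟩ := mem_range_of_exists_le_of_exists_ge continuous_cdf below above
  exact ⟨r, by rw [← ν_apply measurableSet_Iic, ← hr, ofReal_measureReal]⟩

variable {E : Type*} [NormedAddCommGroup E] [NormedSpace ℝ E] [FiniteDimensional ℝ E]
  [Nontrivial E] [MeasurableSpace E] [BorelSpace E] {μ : Measure E} [μ.IsAddHaarMeasure] {s : ℝ}

theorem exists_measurableSet_subset_measure_eq {B : Set E} (hB : MeasurableSet B) (hs : 0 < s)
    (hsB : ENNReal.ofReal s < μ B) :
    ∃ A ⊆ B, MeasurableSet A ∧ μ A = ENNReal.ofReal s := by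
  obtain ⟨B', hB', hB'B, hsB', hB'_fin⟩ := μ.exists_subset_measure_lt_top hB hsB
  have : IsFiniteMeasure (μ.restrict B') := ⟨by rwa [Measure.restrict_apply_univ]⟩
  have sphere_null (r : ℝ) : μ.restrict B' (norm ⁻¹' {r}) = 0 := by
    refine nonpos_iff_eq_zero.1 ((Measure.restrict_le_self _).trans_eq ?_)
    rw [← μ.addHaar_sphere (0 : E) r]
    congr 1
    ext x
    simp
  obtain ⟨r, hr⟩ := exists_measure_preimage_Iic_eq measurable_norm sphere_null hs
    (by rwa [Measure.restrict_apply_univ])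
  exact ⟨norm ⁻¹' Iic r ∩ B', inter_subset_right.trans hB'B,
    (measurable_norm measurableSet_Iic).inter hB',
    by rwa [← Measure.restrict_apply (measurable_norm measurableSet_Iic)]⟩

theorem mul_decreasingRearrangement_le_maxSetLIntegral {f : E → ℝ≥0∞} (hf : AEMeasurable f μ)
    (hs : 0 < s) :
    ENNReal.ofReal s * decreasingRearrangement μ f s ≤ maxSetLIntegral μ f s := by
  refine mul_le_of_forall_lt fun s' hs' l hl ↦ ?_
  have : NullMeasurableSet {x | l < f x} μ := nullMeasurableSet_lt aemeasurable_const hf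
  obtain ⟨B, hB_sub, hB, hB_eq⟩ := this.exists_measurable_subset_ae_eq
  rw [lt_decreasingRearrangement_iff, ← measure_congr hB_eq] at hl
  obtain ⟨A, hAB, hA, hAs⟩ := exists_measurableSet_subset_measure_eq hB hs hl
  calc s' * l ≤ l * μ A := by rw [hAs, mul_comm]; gcongr
    _ = ∫⁻ _ in A, l ∂μ := (setLIntegral_const A l).symm
    _ ≤ ∫⁻ x in A, f x ∂μ := setLIntegral_mono' hA fun x hx ↦ (hB_sub (hAB hx)).le
    _ ≤ maxSetLIntegral μ f s := setLIntegral_le_maxSetLIntegral hA hAs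

end IntermediateMeasure

section ShiftedLog

variable {b s t : ℝ}

/-- The factor `logFac` with `e` replaced by `exp b`, so that the values are at least `b`. -/
noncomputable def shiftedLog (b s : ℝ) : ℝ := Real.log (Real.exp b + 1 / s)

lemma le_shiftedLog (hs : 0 < s) : b ≤ shiftedLog b s := by
  rw [shiftedLog, Real.le_log_iff_exp_le (by positivity)]
  exact le_add_of_nonneg_right (by positivity)

lemma shiftedLog_pos (hb : 0 < b) (hs : 0 < s) : 0 < shiftedLog b s :=
  hb.trans_le (le_shiftedLog hs)

lemma antitoneOn_shiftedLog : AntitoneOn (shiftedLog b) (Ioi 0) :=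
  fun s (hs : 0 < s) t (ht : 0 < t) hst ↦ by
    unfold shiftedLog
    gcongr

lemma logFac_le_shiftedLog (hb : 1 ≤ b) (hs : 0 < s) : logFac s ≤ shiftedLog b s := by
  unfold logFac shiftedLog
  gcongr

lemma one_le_logFac (hs : 0 < s) : 1 ≤ logFac s := le_shiftedLog hs

lemma shiftedLog_le_mul_logFac (hb : 0 ≤ b) (hs : 0 < s) :
    shiftedLog b s ≤ (b + 1) * logFac s := by
  have arg_le : Real.exp b + 1 / s ≤ Real.exp b * (Real.exp 1 + 1 / s) := by
    rw [mul_add]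
    gcongr
    · exact le_mul_of_one_le_right (by positivity) (Real.one_le_exp zero_le_one)
    · exact le_mul_of_one_le_left (by positivity) (Real.one_le_exp hb)
  calc shiftedLog b s ≤ Real.log (Real.exp b * (Real.exp 1 + 1 / s)) :=
        Real.log_le_log (by positivity) arg_le
    _ = b + logFac s := by
        rw [Real.log_mul (by positivity) (by positivity), Real.log_exp, logFac]
    _ ≤ (b + 1) * logFac s := by nlinarith [one_le_logFac hs]

lemma shiftedLog_le_log_div_add (hs : 0 < s) (hst : s ≤ t) :
    shiftedLog b s ≤ Real.log (t / s) + shiftedLog b t := by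
  have ht : 0 < t := hs.trans_le hst
  rw [shiftedLog, shiftedLog, ← Real.log_mul (by positivity) (by positivity)]
  refine Real.log_le_log (by positivity) ?_
  have one_le : 1 ≤ t / s := (one_le_div hs).2 hst
  calc Real.exp b + 1 / s ≤ t / s * Real.exp b + 1 / s := by
        gcongr; exact le_mul_of_one_le_left (by positivity) one_le
    _ = t / s * (Real.exp b + 1 / t) := by field_simp

lemma monotoneOn_mul_shiftedLog_rpow (hb : 0 < b) :
    MonotoneOn (fun s ↦ s * shiftedLog b s ^ b) (Ioi 0) := by
  intro s (hs : 0 < s) t (ht : 0 < t) hst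
  have hMs : 0 < shiftedLog b s := shiftedLog_pos hb hs
  have hMt : 0 < shiftedLog b t := shiftedLog_pos hb ht
  have log_nonneg : 0 ≤ Real.log (t / s) := Real.log_nonneg ((one_le_div hs).2 hst)
  have shiftedLog_le : shiftedLog b s ≤ shiftedLog b t * Real.exp (Real.log (t / s) / b) :=
    calc shiftedLog b s ≤ Real.log (t / s) + shiftedLog b t := shiftedLog_le_log_div_add hs hst
      _ = b * (Real.log (t / s) / b) + shiftedLog b t := by field_simp
      _ ≤ shiftedLog b t * (Real.log (t / s) / b) + shiftedLog b t := by
          gcongr; exact le_shiftedLog ht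
      _ = shiftedLog b t * (Real.log (t / s) / b + 1) := by ring
      _ ≤ shiftedLog b t * Real.exp (Real.log (t / s) / b) := by
          gcongr; exact Real.add_one_le_exp _
  calc s * shiftedLog b s ^ b
      ≤ s * (shiftedLog b t * Real.exp (Real.log (t / s) / b)) ^ b := by gcongr
    _ = s * (shiftedLog b t ^ b * (t / s)) := by
        rw [Real.mul_rpow hMt.le (Real.exp_nonneg _), ← Real.exp_mul,
          div_mul_cancel₀ _ hb.ne', Real.exp_log (by positivity)]
    _ = t * shiftedLog b t ^ b := by field_simp

lemma hasDerivAt_shiftedLog (hs : 0 < s) :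
    HasDerivAt (shiftedLog b) (-(s * (Real.exp b * s + 1))⁻¹) s := by
  have hasDerivAt_arg : HasDerivAt (fun s ↦ Real.exp b + 1 / s) (-(s ^ 2)⁻¹) s := by
    simpa only [one_div] using (hasDerivAt_inv hs.ne').const_add (Real.exp b)
  refine (hasDerivAt_arg.log (by positivity)).congr_deriv ?_
  field_simp

lemma continuousOn_shiftedLog : ContinuousOn (shiftedLog b) (Ioi 0) := fun _ hs ↦
  (hasDerivAt_shiftedLog hs).continuousAt.continuousWithinAt

end ShiftedLog

section ZygmundNorms

variable {n : ℕ} {q α s : ℝ} {f : EuclideanSpace ℝ (Fin n) → ℝ}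

lemma one_le_ofReal_logFac_rpow (hα : 0 ≤ α) (hs : 0 < s) : 1 ≤ ENNReal.ofReal (logFac s) ^ α := by
  simpa only [ENNReal.one_rpow] using
    ENNReal.rpow_le_rpow (ENNReal.one_le_ofReal.2 (one_le_logFac hs)) hα

lemma antitoneOn_ofReal_logFac_rpow (hα : 0 ≤ α) :
    AntitoneOn (fun s ↦ ENNReal.ofReal (logFac s) ^ α) (Ioi 0) := fun _ hs _ ht hst ↦
  ENNReal.rpow_le_rpow (ENNReal.ofReal_le_ofReal (antitoneOn_shiftedLog hs ht hst)) hα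

lemma rearr_rpow (hq : 0 < q) :
    rearr n f s ^ q = decreasingRearrangement volume (fun x ↦ ENNReal.ofReal (|f x| ^ q)) s := by
  simp only [← ENNReal.ofReal_rpow_of_nonneg (abs_nonneg _) hq.le, decreasingRearrangement_rpow hq]
  rfl

lemma zygNorm_eq_iSup :
    zygNorm n q α f = ⨆ s : Ioi (0 : ℝ), (ENNReal.ofReal (logFac s) ^ α *
      maxSetLIntegral volume (fun x ↦ ENNReal.ofReal (|f x| ^ q)) s) ^ (1 / q) :=
  rfl

lemma zygmundNorm_eq_lintegral (hq : 0 < q) :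
    zygmundNorm n q α f = (∫⁻ s in Ioi (0 : ℝ), ENNReal.ofReal (logFac s) ^ α *
      decreasingRearrangement volume (fun x ↦ ENNReal.ofReal (|f x| ^ q)) s) ^ (1 / q) := by
  simp only [zygmundNorm, rearr_rpow hq]

lemma weakZygNorm_eq_iSup (hq : 0 < q) :
    weakZygNorm n q α f = ⨆ s : Ioi (0 : ℝ), (ENNReal.ofReal (logFac s) ^ α * ENNReal.ofReal s *
      decreasingRearrangement volume (fun x ↦ ENNReal.ofReal (|f x| ^ q)) s) ^ (1 / q) := by
  simp only [weakZygNorm, rearr_rpow hq]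

theorem zygNorm_le_zygmundNorm (hq : 0 < q) (hα : 0 ≤ α) :
    zygNorm n q α f ≤ zygmundNorm n q α f := by
  rw [zygNorm_eq_iSup, zygmundNorm_eq_lintegral hq]
  refine iSup_le fun s ↦ ENNReal.rpow_le_rpow ?_ (by positivity)
  exact mul_maxSetLIntegral_le_lintegral_mul_decreasingRearrangement
    (antitoneOn_ofReal_logFac_rpow hα) s.2

theorem weakZygNorm_le_zygNorm (hn : 1 ≤ n) (hq : 0 < q) (hf : AEMeasurable f) :
    weakZygNorm n q α f ≤ zygNorm n q α f := by
  have : Nonempty (Fin n) := ⟨⟨0, hn⟩⟩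
  rw [weakZygNorm_eq_iSup hq, zygNorm_eq_iSup]
  refine iSup_mono fun s ↦ ENNReal.rpow_le_rpow ?_ (by positivity)
  rw [mul_assoc]
  gcongr
  exact mul_decreasingRearrangement_le_maxSetLIntegral (by fun_prop) s.2

theorem locallyIntegrable_of_zygNorm_lt_top (hq : 1 ≤ q) (hα : 0 ≤ α)
    (hf : AEStronglyMeasurable f) (hf_fin : zygNorm n q α f < ⊤) : LocallyIntegrable f := by
  intro x
  refine ⟨Metric.ball x 1, Metric.ball_mem_nhds x one_pos, ?_⟩
  have hq₀ : 0 < q := one_pos.trans_le hq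
  have ball_ne_top : volume (Metric.ball x 1) ≠ ⊤ := measure_ball_lt_top.ne
  set s := volume.real (Metric.ball x 1)
  have hs : 0 < s := ENNReal.toReal_pos (Metric.measure_ball_pos _ x one_pos).ne' ball_ne_top
  have lintegral_lt_top : ∫⁻ y in Metric.ball x 1, ENNReal.ofReal (|f y| ^ q) < ⊤ := by
    refine (ENNReal.rpow_lt_top_iff_of_pos (one_div_pos.2 hq₀)).1 (lt_of_le_of_lt ?_ hf_fin)
    rw [zygNorm_eq_iSup]
    refine le_iSup_of_le ⟨s, hs⟩ (ENNReal.rpow_le_rpow ?_ (by positivity))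
    calc ∫⁻ y in Metric.ball x 1, ENNReal.ofReal (|f y| ^ q)
        ≤ maxSetLIntegral volume (fun y ↦ ENNReal.ofReal (|f y| ^ q)) s :=
          setLIntegral_le_maxSetLIntegral measurableSet_ball (ofReal_measureReal ball_ne_top).symm
      _ ≤ _ := le_mul_of_one_le_left' (one_le_ofReal_logFac_rpow hα hs)
  have memLp : MemLp f (ENNReal.ofReal q) (volume.restrict (Metric.ball x 1)) := by
    refine ⟨hf.restrict, ?_⟩
    rw [eLpNorm_lt_top_iff_lintegral_rpow_enorm_lt_top (by simpa using hq₀) ENNReal.ofReal_ne_top,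
      ENNReal.toReal_ofReal hq₀.le]
    simpa only [Real.enorm_eq_ofReal_abs, ENNReal.ofReal_rpow_of_nonneg (abs_nonneg _) hq₀.le]
      using lintegral_lt_top
  have : IsFiniteMeasure (volume.restrict (Metric.ball x 1)) :=
    isFiniteMeasure_restrict.2 ball_ne_top
  exact memLp.integrable (ENNReal.one_le_ofReal.2 hq)

end ZygmundNorms

section RadialTransport

variable {E : Type*} [NormedAddCommGroup E] [NormedSpace ℝ E] [FiniteDimensional ℝ E]
  [MeasurableSpace E] [BorelSpace E] (μ : Measure E) [μ.IsAddHaarMeasure]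

/-- The volume of the centred ball whose boundary passes through `x`. This map transports Haar
measure to Lebesgue measure on `(0, ∞)`, so that every profile on `(0, ∞)` is realised by a
radial function. -/
noncomputable def centeredBallVolume (x : E) : ℝ := μ.real (Metric.closedBall 0 ‖x‖)

lemma centeredBallVolume_eq (x : E) :
    centeredBallVolume μ x = ‖x‖ ^ Module.finrank ℝ E * μ.real (Metric.ball 0 1) :=
  μ.addHaar_real_closedBall 0 (norm_nonneg x)

lemma continuous_centeredBallVolume : Continuous (centeredBallVolume μ) := by
  rw [funext (centeredBallVolume_eq μ)]
  fun_prop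

lemma measure_centeredBallVolume_preimage_Iic [Nontrivial E] (a : ℝ) :
    μ (centeredBallVolume μ ⁻¹' Iic a) = ENNReal.ofReal a := by
  obtain ha | ha := lt_or_ge a 0
  · have : centeredBallVolume μ ⁻¹' Iic a = ∅ :=
      eq_empty_of_forall_notMem fun x hx ↦ (ha.trans_le measureReal_nonneg).not_ge hx
    rw [this, measure_empty, ENNReal.ofReal_of_nonpos ha.le]
  set d := Module.finrank ℝ E
  set c := μ.real (Metric.ball (0 : E) 1)
  have hd : d ≠ 0 := Module.finrank_pos.ne'
  have hc : 0 < c :=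
    ENNReal.toReal_pos (Metric.measure_ball_pos μ 0 one_pos).ne' measure_ball_lt_top.ne
  set r := (a / c) ^ (d : ℝ)⁻¹
  have hr : 0 ≤ r := by positivity
  have r_pow_mul : r ^ d * c = a := by
    rw [Real.rpow_inv_natCast_pow (by positivity) hd, div_mul_cancel₀ _ hc.ne']
  have preimage_eq : centeredBallVolume μ ⁻¹' Iic a = Metric.closedBall 0 r := by
    ext x
    rw [mem_preimage, mem_Iic, centeredBallVolume_eq, ← r_pow_mul, mem_closedBall_zero_iff,
      mul_le_mul_iff_left₀ hc, pow_le_pow_iff_left₀ (norm_nonneg x) hr hd]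
  rw [preimage_eq, ← ofReal_measureReal measure_closedBall_lt_top.ne,
    μ.addHaar_real_closedBall 0 hr, r_pow_mul]

theorem measurePreserving_centeredBallVolume [Nontrivial E] :
    MeasurePreserving (centeredBallVolume μ) μ (volume.restrict (Ioi 0)) := by
  have hT : Measurable (centeredBallVolume μ) := (continuous_centeredBallVolume μ).measurable
  have map_Iic (a : ℝ) : μ.map (centeredBallVolume μ) (Iic a) = ENNReal.ofReal a := by
    rw [Measure.map_apply hT measurableSet_Iic, measure_centeredBallVolume_preimage_Iic]
  have iUnion_Iic_natCast : ⋃ k : ℕ, Iic (k : ℝ) = univ :=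
    iUnion_eq_univ_iff.2 fun x ↦ exists_nat_ge x
  refine ⟨hT, Measure.ext_of_generateFrom_of_iUnion (range Iic) (fun k : ℕ ↦ Iic (k : ℝ))
    (BorelSpace.measurable_eq.trans (borel_eq_generateFrom_Iic ℝ)) isPiSystem_Iic
    iUnion_Iic_natCast (fun k ↦ mem_range_self _)
    (fun k ↦ (map_Iic k).trans_ne ENNReal.ofReal_ne_top) ?_⟩
  rintro _ ⟨a, rfl⟩
  rw [map_Iic, Measure.restrict_apply measurableSet_Iic, Iic_inter_Ioi, Real.volume_Ioc, sub_zero]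

end RadialTransport

section MonotoneProfile

variable {X : Type*} [MeasurableSpace X] {μ : Measure X} {T : X → ℝ} {φ : ℝ → ℝ≥0∞} {s t : ℝ}

theorem decreasingRearrangement_comp (hT : MeasurePreserving T μ (volume.restrict (Ioi 0)))
    (hφ : AntitoneOn φ (Ioi 0)) (hφ_cont : ContinuousOn φ (Ioi 0)) (ht : 0 < t) :
    decreasingRearrangement μ (fun x ↦ φ (T x)) t = φ t := by
  have measure_preimage_Ioc (r : ℝ) : μ (T ⁻¹' Ioc 0 r) = ENNReal.ofReal r := by
    rw [hT.measure_preimage measurableSet_Ioc.nullMeasurableSet,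
      Measure.restrict_eq_self _ Ioc_subset_Ioi_self, Real.volume_Ioc, sub_zero]
  have T_pos : ∀ᵐ x ∂μ, 0 < T x :=
    hT.quasiMeasurePreserving.ae (ae_restrict_mem measurableSet_Ioi)
  refine le_antisymm (decreasingRearrangement_le_iff.2 ?_) (le_of_forall_lt fun l hl ↦ ?_)
  · rw [← measure_preimage_Ioc]
    refine measure_mono_ae (T_pos.mono fun x hx hlt ↦ ⟨hx, ?_⟩)
    exact le_of_not_ge fun htx ↦ (hφ ht hx htx).not_gt hlt
  · have eventually_lt : ∀ᶠ r in 𝓝[>] t, l < φ r :=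
      ((hφ_cont.continuousAt (Ioi_mem_nhds ht)).mono_left nhdsWithin_le_nhds).eventually_const_lt hl
    obtain ⟨r, hlr, htr⟩ := (eventually_lt.and self_mem_nhdsWithin).exists
    rw [lt_decreasingRearrangement_iff]
    calc ENNReal.ofReal t < ENNReal.ofReal r := (ENNReal.ofReal_lt_ofReal_iff (ht.trans htr)).2 htr
      _ = μ (T ⁻¹' Ioc 0 r) := (measure_preimage_Ioc r).symm
      _ ≤ μ {x | l < φ (T x)} :=
          measure_mono fun x hx ↦ hlr.trans_le (hφ hx.1 (ht.trans htr) hx.2)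

theorem maxSetLIntegral_comp (hT : MeasurePreserving T μ (volume.restrict (Ioi 0)))
    (hφ : AntitoneOn φ (Ioi 0)) (hφ_cont : ContinuousOn φ (Ioi 0)) :
    maxSetLIntegral μ (fun x ↦ φ (T x)) s = ∫⁻ t in Ioo 0 s, φ t := by
  refine le_antisymm ?_ ?_
  · refine maxSetLIntegral_le_lintegral_decreasingRearrangement.trans_eq ?_
    exact setLIntegral_congr_fun measurableSet_Ioo fun t ht ↦
      decreasingRearrangement_comp hT hφ hφ_cont ht.1
  · have restrict_restrict :
        (volume.restrict (Ioi 0)).restrict (Ioo 0 s) = volume.restrict (Ioo 0 s) :=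
      Measure.restrict_restrict_of_subset Ioo_subset_Ioi_self
    have measure_preimage : μ (T ⁻¹' Ioo 0 s) = ENNReal.ofReal s := by
      rw [hT.measure_preimage measurableSet_Ioo.nullMeasurableSet,
        Measure.restrict_eq_self _ Ioo_subset_Ioi_self, Real.volume_Ioo, sub_zero]
    have hT' : MeasurePreserving T (μ.restrict (T ⁻¹' Ioo 0 s)) (volume.restrict (Ioo 0 s)) :=
      restrict_restrict ▸ hT.restrict_preimage measurableSet_Ioo
    have hφ_meas : AEMeasurable φ (volume.restrict (Ioo 0 s)) :=
      (hφ_cont.mono Ioo_subset_Ioi_self).aemeasurable measurableSet_Ioo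
    calc ∫⁻ t in Ioo 0 s, φ t = ∫⁻ x in T ⁻¹' Ioo 0 s, φ (T x) ∂μ := by
          rw [← hT'.map_eq, lintegral_map' (hT'.map_eq.symm ▸ hφ_meas) hT'.aemeasurable]
      _ ≤ maxSetLIntegral μ (fun x ↦ φ (T x)) s :=
          setLIntegral_le_maxSetLIntegral (hT.measurable measurableSet_Ioo) measure_preimage

end MonotoneProfile

section RadialFunctions

variable {n : ℕ} {q α : ℝ} {φ : ℝ → ℝ}

/-- The radial function `f` such that the non-increasing rearrangement of `|f| ^ q` is the positive
part of `φ`, whenever `φ` is non-increasing and continuous on `(0, ∞)`. -/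
noncomputable def radialOfProfile (n : ℕ) (q : ℝ) (φ : ℝ → ℝ) (x : EuclideanSpace ℝ (Fin n)) : ℝ :=
  max (φ (centeredBallVolume volume x)) 0 ^ (1 / q)

lemma measurable_radialOfProfile (hφ : Measurable φ) : Measurable (radialOfProfile n q φ) := by
  have := (continuous_centeredBallVolume (E := EuclideanSpace ℝ (Fin n)) volume).measurable
  unfold radialOfProfile
  fun_prop

lemma continuous_radialOfProfile (hq : 0 ≤ q) (hφ : Continuous φ) :
    Continuous (radialOfProfile n q φ) :=
  ((hφ.comp (continuous_centeredBallVolume volume)).max continuous_const).rpow_const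
    fun _ ↦ .inr (by positivity)

lemma ofReal_abs_radialOfProfile_rpow (hq : 0 < q) (x : EuclideanSpace ℝ (Fin n)) :
    ENNReal.ofReal (|radialOfProfile n q φ x| ^ q) =
      ENNReal.ofReal (φ (centeredBallVolume volume x)) := by
  rw [radialOfProfile, abs_of_nonneg (by positivity), ← Real.rpow_mul (le_max_right _ _),
    one_div_mul_cancel hq.ne', Real.rpow_one, ENNReal.ofReal_max, ENNReal.ofReal_zero, max_zero]

lemma measurePreserving_centeredBallVolume_euclideanSpace (hn : 1 ≤ n) :
    MeasurePreserving (centeredBallVolume (E := EuclideanSpace ℝ (Fin n)) volume) volume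
      (volume.restrict (Ioi 0)) :=
  have : Nonempty (Fin n) := ⟨⟨0, hn⟩⟩
  measurePreserving_centeredBallVolume volume

variable (hn : 1 ≤ n) (hq : 0 < q) (hφ : AntitoneOn φ (Ioi 0)) (hφ_cont : ContinuousOn φ (Ioi 0))
include hn hq hφ hφ_cont

lemma decreasingRearrangement_radialOfProfile {s : ℝ} (hs : 0 < s) :
    decreasingRearrangement volume (fun x ↦ ENNReal.ofReal (|radialOfProfile n q φ x| ^ q)) s =
      ENNReal.ofReal (φ s) := by
  simp only [ofReal_abs_radialOfProfile_rpow hq]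
  exact decreasingRearrangement_comp (measurePreserving_centeredBallVolume_euclideanSpace hn)
    (ENNReal.ofReal_mono.comp_antitoneOn hφ) (ENNReal.continuous_ofReal.comp_continuousOn hφ_cont)
    hs

lemma zygNorm_radialOfProfile :
    zygNorm n q α (radialOfProfile n q φ) = ⨆ s : Ioi (0 : ℝ),
      (ENNReal.ofReal (logFac s) ^ α * ∫⁻ t in Ioo 0 s.1, ENNReal.ofReal (φ t)) ^ (1 / q) := by
  simp only [zygNorm_eq_iSup, ofReal_abs_radialOfProfile_rpow hq]
  congr! with s
  exact maxSetLIntegral_comp (measurePreserving_centeredBallVolume_euclideanSpace hn)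
    (ENNReal.ofReal_mono.comp_antitoneOn hφ) (ENNReal.continuous_ofReal.comp_continuousOn hφ_cont)

lemma zygmundNorm_radialOfProfile :
    zygmundNorm n q α (radialOfProfile n q φ) =
      (∫⁻ s in Ioi (0 : ℝ), ENNReal.ofReal (logFac s) ^ α * ENNReal.ofReal (φ s)) ^ (1 / q) := by
  rw [zygmundNorm_eq_lintegral hq, setLIntegral_congr_fun measurableSet_Ioi]
  intro s hs
  simp only [decreasingRearrangement_radialOfProfile hn hq hφ hφ_cont hs]

lemma weakZygNorm_radialOfProfile :
    weakZygNorm n q α (radialOfProfile n q φ) = ⨆ s : Ioi (0 : ℝ),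
      (ENNReal.ofReal (logFac s) ^ α * ENNReal.ofReal s * ENNReal.ofReal (φ s)) ^ (1 / q) := by
  rw [weakZygNorm_eq_iSup hq]
  congr! 4 with s
  exact decreasingRearrangement_radialOfProfile hn hq hφ hφ_cont s.2

end RadialFunctions

section LogarithmicProfile

variable {q α b s : ℝ}

/-- The derivative of `shiftedLog b ^ (1 - b) / (b - 1)`, of order `1 / (s * log (1 / s) ^ b)` near
`0`. Shifting the logarithm by `b` makes it decreasing on all of `(0, ∞)`. -/
noncomputable def logProfile (b s : ℝ) : ℝ :=
  (s * shiftedLog b s ^ b * (Real.exp b * s + 1))⁻¹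

lemma antitoneOn_logProfile (hb : 0 < b) : AntitoneOn (logProfile b) (Ioi 0) := by
  intro s (hs : 0 < s) t (ht : 0 < t) hst
  have := shiftedLog_pos hb hs
  exact inv_anti₀ (by positivity) <| mul_le_mul (monotoneOn_mul_shiftedLog_rpow hb hs ht hst)
    (by gcongr) (by positivity) (mul_nonneg ht.le (Real.rpow_nonneg (shiftedLog_pos hb ht).le _))

lemma measurable_logProfile : Measurable (logProfile b) := by
  unfold logProfile shiftedLog
  fun_prop

lemma continuousOn_logProfile (hb : 0 < b) : ContinuousOn (logProfile b) (Ioi 0) := by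
  refine ContinuousOn.inv₀ ?_ fun s (hs : 0 < s) ↦ ?_
  · exact (continuousOn_id.mul (continuousOn_shiftedLog.rpow_const
      fun s hs ↦ .inl (shiftedLog_pos hb hs).ne')).mul (by fun_prop)
  · have := shiftedLog_pos hb hs
    positivity

lemma hasDerivAt_shiftedLog_rpow_div (hα : 0 < α) (hs : 0 < s) :
    HasDerivAt (fun s ↦ shiftedLog (α + 1) s ^ (-α) / α) (logProfile (α + 1) s) s := by
  have log_pos : 0 < shiftedLog (α + 1) s := shiftedLog_pos (by positivity) hs
  refine (((hasDerivAt_shiftedLog hs).rpow_const (.inl log_pos.ne')).div_const α).congr_deriv ?_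
  rw [logProfile, show -α - 1 = -(α + 1) by ring, Real.rpow_neg log_pos.le]
  field_simp

lemma lintegral_logProfile_le (hα : 0 < α) :
    ∫⁻ t in Ioo 0 s, ENNReal.ofReal (logProfile (α + 1) t) ≤
      ENNReal.ofReal (shiftedLog (α + 1) s ^ (-α) / α) := by
  have log_pos {t : ℝ} (ht : 0 < t) : 0 < shiftedLog (α + 1) t :=
    shiftedLog_pos (by positivity) ht
  have primitive_mono : MonotoneOn (fun t ↦ shiftedLog (α + 1) t ^ (-α) / α) (Ioi 0) := by
    intro t (ht : 0 < t) u (hu : 0 < u) htu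
    exact div_le_div_of_nonneg_right (Real.rpow_le_rpow_of_nonpos (log_pos hu)
      (antitoneOn_shiftedLog ht hu htu) (neg_nonpos.2 hα.le)) hα.le
  rw [lintegral_deriv_eq_volume_image_of_monotoneOn measurableSet_Ioo
    (fun t ht ↦ (hasDerivAt_shiftedLog_rpow_div hα ht.1).hasDerivWithinAt)
    (primitive_mono.mono Ioo_subset_Ioi_self)]
  calc volume ((fun t ↦ shiftedLog (α + 1) t ^ (-α) / α) '' Ioo 0 s)
      ≤ volume (Icc 0 (shiftedLog (α + 1) s ^ (-α) / α)) := by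
        refine measure_mono ?_
        rintro _ ⟨t, ht, rfl⟩
        have := log_pos ht.1
        exact ⟨by positivity, primitive_mono ht.1 (ht.1.trans ht.2) ht.2.le⟩
    _ = _ := by rw [Real.volume_Icc, sub_zero]

lemma lintegral_inv_mul_shiftedLog_eq_top (hb : 0 < b) :
    ∫⁻ s in Ioi (0 : ℝ), ENNReal.ofReal (s * shiftedLog b s * (Real.exp b * s + 1))⁻¹ = ⊤ := by
  have deriv_log_log (s : ℝ) (hs : s ∈ Ioi (0 : ℝ)) :
      HasDerivWithinAt (fun s ↦ Real.log (shiftedLog b s))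
        (-(s * shiftedLog b s * (Real.exp b * s + 1))⁻¹) (Ioi 0) s := by
    have hs₀ : 0 < s := hs
    have := shiftedLog_pos hb hs₀
    refine ((hasDerivAt_shiftedLog hs).log this.ne').hasDerivWithinAt.congr_deriv ?_
    field_simp
  have log_log_anti : AntitoneOn (fun s ↦ Real.log (shiftedLog b s)) (Ioi 0) :=
    fun s hs t ht hst ↦ Real.log_le_log (shiftedLog_pos hb ht) (antitoneOn_shiftedLog hs ht hst)
  have image_supset : Ioi (Real.log b) ⊆ (fun s ↦ Real.log (shiftedLog b s)) '' Ioi 0 := by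
    intro y hy
    have exp_lt : Real.exp b < Real.exp (Real.exp y) :=
      Real.exp_lt_exp.2 ((Real.log_lt_iff_lt_exp hb).1 hy)
    refine ⟨1 / (Real.exp (Real.exp y) - Real.exp b), one_div_pos.2 (sub_pos.2 exp_lt), ?_⟩
    simp only [shiftedLog, one_div_one_div, add_sub_cancel, Real.log_exp]
  have integral_eq := lintegral_deriv_eq_volume_image_of_antitoneOn measurableSet_Ioi
    deriv_log_log log_log_anti
  simp only [neg_neg] at integral_eq
  rw [integral_eq, eq_top_iff, ← Real.volume_Ioi (a := Real.log b)]
  exact measure_mono image_supset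

lemma lintegral_logFac_rpow_mul_logProfile_eq_top (hα : 0 ≤ α) :
    ∫⁻ s in Ioi (0 : ℝ),
      ENNReal.ofReal (logFac s) ^ α * ENNReal.ofReal (logProfile (α + 1) s) = ⊤ := by
  set b := α + 1
  have hb : 0 < b := by positivity
  have pointwise (s : ℝ) (hs : s ∈ Ioi (0 : ℝ)) :
      ENNReal.ofReal (s * shiftedLog b s * (Real.exp b * s + 1))⁻¹ ≤
        ENNReal.ofReal ((b + 1) ^ α) *
          (ENNReal.ofReal (logFac s) ^ α * ENNReal.ofReal (logProfile b s)) := by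
    have hs₀ : 0 < s := hs
    have log_pos : 0 < shiftedLog b s := shiftedLog_pos hb hs
    have logFac_nonneg : 0 ≤ logFac s := zero_le_one.trans (one_le_logFac hs)
    rw [ENNReal.ofReal_rpow_of_nonneg logFac_nonneg hα, ← ENNReal.ofReal_mul (by positivity),
      ← ENNReal.ofReal_mul (by positivity), ← mul_assoc,
      ← Real.mul_rpow (by positivity) logFac_nonneg]
    refine ENNReal.ofReal_le_ofReal ?_
    calc (s * shiftedLog b s * (Real.exp b * s + 1))⁻¹
        = shiftedLog b s ^ α * logProfile b s := by
          rw [logProfile, Real.rpow_add_one log_pos.ne']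
          field_simp
      _ ≤ ((b + 1) * logFac s) ^ α * logProfile b s := by
          have : 0 ≤ logProfile b s := by unfold logProfile; positivity
          gcongr
          exact shiftedLog_le_mul_logFac hb.le hs
  have scaled_eq_top := eq_top_iff.2 ((lintegral_inv_mul_shiftedLog_eq_top hb).ge.trans
    (setLIntegral_mono' measurableSet_Ioi pointwise))
  rw [lintegral_const_mul' _ _ ENNReal.ofReal_ne_top] at scaled_eq_top
  exact (ENNReal.mul_eq_top.1 scaled_eq_top).elim (·.2) fun h ↦ absurd h.1 ENNReal.ofReal_ne_top

lemma zygNorm_radialOfProfile_logProfile_lt_top {n : ℕ} (hn : 1 ≤ n) (hq : 0 < q) (hα : 0 < α) :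
    zygNorm n q α (radialOfProfile n q (logProfile (α + 1))) < ⊤ := by
  have hb : 0 < α + 1 := by positivity
  rw [zygNorm_radialOfProfile hn hq (antitoneOn_logProfile hb) (continuousOn_logProfile hb)]
  refine lt_of_le_of_lt (b := ENNReal.ofReal (1 / α) ^ (1 / q)) (iSup_le fun ⟨s, hs⟩ ↦ ?_)
    (ENNReal.rpow_lt_top_of_nonneg (by positivity) ENNReal.ofReal_ne_top)
  gcongr
  have log_pos : 0 < shiftedLog (α + 1) s := shiftedLog_pos hb hs
  calc ENNReal.ofReal (logFac s) ^ α * ∫⁻ t in Ioo 0 s, ENNReal.ofReal (logProfile (α + 1) t)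
      ≤ ENNReal.ofReal (shiftedLog (α + 1) s) ^ α *
          ENNReal.ofReal (shiftedLog (α + 1) s ^ (-α) / α) := by
        gcongr
        · exact logFac_le_shiftedLog (by linarith) hs
        · exact lintegral_logProfile_le hα
    _ = ENNReal.ofReal (1 / α) := by
        rw [ENNReal.ofReal_rpow_of_pos log_pos, ← ENNReal.ofReal_mul (by positivity),
          Real.rpow_neg log_pos.le]
        congr 1
        field_simp

lemma zygmundNorm_radialOfProfile_logProfile_eq_top {n : ℕ} (hn : 1 ≤ n) (hq : 0 < q)
    (hα : 0 ≤ α) : zygmundNorm n q α (radialOfProfile n q (logProfile (α + 1))) = ⊤ := by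
  have hb : 0 < α + 1 := by positivity
  rw [zygmundNorm_radialOfProfile hn hq (antitoneOn_logProfile hb) (continuousOn_logProfile hb),
    lintegral_logFac_rpow_mul_logProfile_eq_top hα, ENNReal.top_rpow_of_pos (by positivity)]

theorem exists_zygNorm_lt_top_zygmundNorm_eq_top {n : ℕ} (hn : 1 ≤ n) (hq : 1 ≤ q) (hα : 0 < α) :
    ∃ f : EuclideanSpace ℝ (Fin n) → ℝ, LocallyIntegrable f volume ∧
      zygNorm n q α f < ⊤ ∧ zygmundNorm n q α f = ⊤ := by
  have hq₀ : 0 < q := one_pos.trans_le hq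
  have zygNorm_lt_top := zygNorm_radialOfProfile_logProfile_lt_top hn hq₀ hα
  exact ⟨_, locallyIntegrable_of_zygNorm_lt_top hq hα.le
    (measurable_radialOfProfile measurable_logProfile).aestronglyMeasurable zygNorm_lt_top,
    zygNorm_lt_top, zygmundNorm_radialOfProfile_logProfile_eq_top hn hq₀ hα.le⟩

end LogarithmicProfile

section HarmonicProfile

variable {n : ℕ} {q α s : ℝ}

lemma continuous_inv_max_one : Continuous fun t : ℝ ↦ (max 1 t)⁻¹ :=
  (continuous_const.max continuous_id).inv₀ fun _ ↦ (lt_max_of_lt_left one_pos).ne'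

lemma antitone_inv_max_one : Antitone fun t : ℝ ↦ (max 1 t)⁻¹ := fun _ _ hst ↦
  inv_anti₀ (lt_max_of_lt_left one_pos) (max_le_max le_rfl hst)

lemma logFac_rpow_mul_le (hα : 0 ≤ α) (hs : 0 < s) :
    logFac s ^ α * s ≤ (α + 1) ^ α * (Real.exp 1 * s + 1) := by
  set u := Real.exp 1 + 1 / s
  have hu : 1 ≤ u := (Real.one_le_exp zero_le_one).trans (le_add_of_nonneg_right (by positivity))
  have logFac_le : logFac s ≤ (α + 1) * u ^ (1 / (α + 1)) :=
    (Real.log_le_rpow_div (ε := 1 / (α + 1)) (by positivity) (by positivity)).trans_eq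
      (by rw [div_div_eq_mul_div, div_one, mul_comm])
  have logFac_nonneg : 0 ≤ logFac s := zero_le_one.trans (one_le_logFac hs)
  calc logFac s ^ α * s ≤ ((α + 1) * u ^ (1 / (α + 1))) ^ α * s := by gcongr
    _ = (α + 1) ^ α * u ^ (1 / (α + 1) * α) * s := by
        rw [Real.mul_rpow (by positivity) (by positivity), ← Real.rpow_mul (by positivity)]
    _ ≤ (α + 1) ^ α * u ^ (1 : ℝ) * s := by
        gcongr
        rw [one_div_mul_eq_div, div_le_one (by positivity)]
        linarith
    _ = (α + 1) ^ α * (Real.exp 1 * s + 1) := by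
        rw [Real.rpow_one]
        simp only [u]
        field_simp

lemma weakZygNorm_radialOfProfile_inv_max_one_lt_top (hn : 1 ≤ n) (hq : 0 < q) (hα : 0 ≤ α) :
    weakZygNorm n q α (radialOfProfile n q fun t ↦ (max 1 t)⁻¹) < ⊤ := by
  rw [weakZygNorm_radialOfProfile hn hq (antitone_inv_max_one.antitoneOn _)
    continuous_inv_max_one.continuousOn]
  refine lt_of_le_of_lt (b := ENNReal.ofReal ((α + 1) ^ α * (Real.exp 1 + 1)) ^ (1 / q))
    (iSup_le fun ⟨s, hs⟩ ↦ ?_)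
    (ENNReal.rpow_lt_top_of_nonneg (by positivity) ENNReal.ofReal_ne_top)
  have hs : 0 < s := hs
  have logFac_nonneg : 0 ≤ logFac s := zero_le_one.trans (one_le_logFac hs)
  have max_pos : 0 < max 1 s := lt_max_of_lt_left one_pos
  gcongr
  rw [ENNReal.ofReal_rpow_of_nonneg logFac_nonneg hα, ← ENNReal.ofReal_mul (by positivity),
    ← ENNReal.ofReal_mul (by positivity)]
  refine ENNReal.ofReal_le_ofReal ((mul_inv_le_iff₀ max_pos).2 ?_)
  calc logFac s ^ α * s ≤ (α + 1) ^ α * (Real.exp 1 * s + 1) := logFac_rpow_mul_le hα hs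
    _ ≤ (α + 1) ^ α * (Real.exp 1 * max 1 s + max 1 s) := by
        gcongr
        · exact le_max_right 1 s
        · exact le_max_left 1 s
    _ = (α + 1) ^ α * (Real.exp 1 + 1) * max 1 s := by ring

lemma ofReal_log_le_lintegral_inv_max_one (hs : 0 < s) :
    ENNReal.ofReal (Real.log s) ≤ ∫⁻ t in Ioo 0 s, ENNReal.ofReal (max 1 t)⁻¹ := by
  have image_supset : Ioo 0 (Real.log s) ⊆ Real.log '' Ioo 1 s := fun y hy ↦
    ⟨Real.exp y, ⟨Real.one_lt_exp_iff.2 hy.1, (Real.lt_log_iff_exp_lt hs).1 hy.2⟩, Real.log_exp y⟩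
  have pos_of_mem {t : ℝ} (ht : t ∈ Ioo 1 s) : 0 < t := one_pos.trans ht.1
  calc ENNReal.ofReal (Real.log s) = volume (Ioo 0 (Real.log s)) := by
        rw [Real.volume_Ioo, sub_zero]
    _ ≤ volume (Real.log '' Ioo 1 s) := measure_mono image_supset
    _ = ∫⁻ t in Ioo 1 s, ENNReal.ofReal t⁻¹ :=
        (lintegral_deriv_eq_volume_image_of_monotoneOn measurableSet_Ioo
          (fun t ht ↦ (Real.hasDerivAt_log (pos_of_mem ht).ne').hasDerivWithinAt)
          (fun t ht u _ htu ↦ Real.log_le_log (pos_of_mem ht) htu)).symm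
    _ = ∫⁻ t in Ioo 1 s, ENNReal.ofReal (max 1 t)⁻¹ :=
        setLIntegral_congr_fun measurableSet_Ioo fun t ht ↦ by rw [max_eq_right ht.1.le]
    _ ≤ ∫⁻ t in Ioo 0 s, ENNReal.ofReal (max 1 t)⁻¹ :=
        lintegral_mono_set (Ioo_subset_Ioo_left zero_le_one)

lemma zygNorm_radialOfProfile_inv_max_one_eq_top (hn : 1 ≤ n) (hq : 0 < q) (hα : 0 ≤ α) :
    zygNorm n q α (radialOfProfile n q fun t ↦ (max 1 t)⁻¹) = ⊤ := by
  rw [zygNorm_radialOfProfile hn hq (antitone_inv_max_one.antitoneOn _)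
    continuous_inv_max_one.continuousOn]
  refine ENNReal.eq_top_of_forall_nnreal_le fun C ↦ ?_
  refine le_iSup_of_le ⟨Real.exp ((C : ℝ) ^ q), Real.exp_pos _⟩ ?_
  rw [one_div, ENNReal.le_rpow_inv_iff hq]
  calc (C : ℝ≥0∞) ^ q = ENNReal.ofReal (Real.log (Real.exp ((C : ℝ) ^ q))) := by
        rw [Real.log_exp, ← ENNReal.ofReal_rpow_of_nonneg C.coe_nonneg hq.le,
          ENNReal.ofReal_coe_nnreal]
    _ ≤ _ := (ofReal_log_le_lintegral_inv_max_one (Real.exp_pos _)).trans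
        (le_mul_of_one_le_left' (one_le_ofReal_logFac_rpow hα (Real.exp_pos _)))

theorem exists_weakZygNorm_lt_top_zygNorm_eq_top (hn : 1 ≤ n) (hq : 0 < q) (hα : 0 ≤ α) :
    ∃ g : EuclideanSpace ℝ (Fin n) → ℝ, LocallyIntegrable g volume ∧
      weakZygNorm n q α g < ⊤ ∧ zygNorm n q α g = ⊤ :=
  ⟨_, (continuous_radialOfProfile hq.le continuous_inv_max_one).locallyIntegrable,
    weakZygNorm_radialOfProfile_inv_max_one_lt_top hn hq hα,
    zygNorm_radialOfProfile_inv_max_one_eq_top hn hq hα⟩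

end HarmonicProfile

theorem stmt16_general (n : ℕ) (hn : 1 ≤ n) (q α : ℝ) (hq : 0 < q) (hα : 0 ≤ α) :
    (∀ f : EuclideanSpace ℝ (Fin n) → ℝ, zygNorm n q α f ≤ zygmundNorm n q α f) ∧
    (∀ f : EuclideanSpace ℝ (Fin n) → ℝ, AEMeasurable f volume →
      weakZygNorm n q α f ≤ zygNorm n q α f) ∧
    (1 ≤ q → 0 < α → ∃ f : EuclideanSpace ℝ (Fin n) → ℝ, LocallyIntegrable f volume ∧
      zygNorm n q α f < ⊤ ∧ zygmundNorm n q α f = ⊤) ∧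
    (∃ g : EuclideanSpace ℝ (Fin n) → ℝ, LocallyIntegrable g volume ∧
      weakZygNorm n q α g < ⊤ ∧ zygNorm n q α g = ⊤) :=
  ⟨fun _ ↦ zygNorm_le_zygmundNorm hq hα, fun _ hf ↦ weakZygNorm_le_zygNorm hn hq hf,
    fun hq hα ↦ exists_zygNorm_lt_top_zygmundNorm_eq_top hn hq hα,
    exists_weakZygNorm_lt_top_zygNorm_eq_top hn hq hα⟩

theorem stmt16 (n : ℕ) (hn : 1 ≤ n) (q α : ℝ) (hq : 1 ≤ q) (hα : 0 ≤ α) :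
    (∀ f : EuclideanSpace ℝ (Fin n) → ℝ, LocallyIntegrable f volume →
      zygNorm n q α f ≤ zygmundNorm n q α f) ∧
    (∀ f : EuclideanSpace ℝ (Fin n) → ℝ, LocallyIntegrable f volume →
      weakZygNorm n q α f ≤ zygNorm n q α f) ∧
    (0 < α →
      (∃ f : EuclideanSpace ℝ (Fin n) → ℝ, LocallyIntegrable f volume ∧
        zygNorm n q α f < ⊤ ∧ zygmundNorm n q α f = ⊤) ∧
      (∃ g : EuclideanSpace ℝ (Fin n) → ℝ, LocallyIntegrable g volume ∧
        weakZygNorm n q α g < ⊤ ∧ zygNorm n q α g = ⊤)) :=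
  have ⟨le_zygmund, weak_le, strict_zygmund, strict_weak⟩ :=
    stmt16_general n hn q α (one_pos.trans_le hq) hα
  ⟨fun f _ ↦ le_zygmund f, fun f hf ↦ weak_le f hf.aestronglyMeasurable.aemeasurable,
    fun hα ↦ ⟨strict_zygmund hq hα, strict_weak⟩⟩
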